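/- arXiv:1412.6461 — 2 statements merged into one kernel-verified Lean document; each statement's English description precedes it below -/
import Mathlib

section
/- Let u : ℝ³ → ℝ be a smooth solution of the Pavlov equation u_yy = u_tx + u_y·u_xx − u_x·u_xy (coordinates (t,x,y), subscripts denoting partial derivatives). Then the function φ := u_t − 2x·u_x − y·u_y + 3u satisfies the linearized equation φ_yy = φ_tx + u_y·φ_xx + u_xx·φ_y − u_x·φ_xy − u_xy·φ_x at every point of ℝ³ (i.e., φ is a symmetry of the Pavlov equation). -/
/-- Partial derivative of a function on `ℝ³` in the direction `v`. -/
noncomputable def pd (v : ℝ × ℝ × ℝ) (f : ℝ × ℝ × ℝ → ℝ) : ℝ × ℝ × ℝ → ℝ :=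
  fun p => fderiv ℝ f p v

/-- Coordinates are `(t, x, y)`. -/
noncomputable def dt : (ℝ × ℝ × ℝ → ℝ) → ℝ × ℝ × ℝ → ℝ := pd (1, 0, 0)
noncomputable def dx : (ℝ × ℝ × ℝ → ℝ) → ℝ × ℝ × ℝ → ℝ := pd (0, 1, 0)
noncomputable def dy : (ℝ × ℝ × ℝ → ℝ) → ℝ × ℝ × ℝ → ℝ := pd (0, 0, 1)

/-- The symmetry `φ = u_t − 2x·u_x − y·u_y + 3u` of the Pavlov equation. -/
noncomputable def phi (u : ℝ × ℝ × ℝ → ℝ) : ℝ × ℝ × ℝ → ℝ :=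
  fun p => dt u p - 2 * p.2.1 * dx u p - p.2.2 * dy u p + 3 * u p

/-- Generalized scaling operator `u_t − 2x·u_x − y·u_y + k·u`. -/
noncomputable def gop (k : ℝ) (u : ℝ × ℝ × ℝ → ℝ) : ℝ × ℝ × ℝ → ℝ :=
  fun p => dt u p - 2 * p.2.1 * dx u p - p.2.2 * dy u p + k * u p

lemma pd_smooth (v : ℝ × ℝ × ℝ) {f : ℝ × ℝ × ℝ → ℝ} (hf : ContDiff ℝ (⊤ : ℕ∞) f) :
    ContDiff ℝ (⊤ : ℕ∞) (pd v f) := by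
  unfold pd
  exact (hf.fderiv_right (m := (⊤ : ℕ∞)) (by simp)).clm_apply contDiff_const

lemma smooth_diff {f : ℝ × ℝ × ℝ → ℝ} (hf : ContDiff ℝ (⊤ : ℕ∞) f) : Differentiable ℝ f :=
  hf.differentiable (by simp)

lemma pd_comm (v w : ℝ × ℝ × ℝ) {f : ℝ × ℝ × ℝ → ℝ} (hf : ContDiff ℝ (⊤ : ℕ∞) f) :
    pd v (pd w f) = pd w (pd v f) := by
  have hd : Differentiable ℝ (fderiv ℝ f) :=
    (hf.fderiv_right (m := (⊤ : ℕ∞)) (by simp)).differentiable (by simp)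
  have key : ∀ (a b : ℝ × ℝ × ℝ) p, pd a (pd b f) p = fderiv ℝ (fderiv ℝ f) p a b := by
    intro a b p
    unfold pd
    rw [fderiv_clm_apply (hd p) (differentiableAt_const b)]
    simp
  funext p
  rw [key, key]
  exact (hf.contDiffAt.isSymmSndFDerivAt
    (by simp only [minSmoothness_of_isRCLikeNormedField]; exact WithTop.coe_le_coe.2 (le_top : (2 : ℕ∞) ≤ ⊤))) v w

lemma pd_add (v : ℝ × ℝ × ℝ) {f g : ℝ × ℝ × ℝ → ℝ} (hf : Differentiable ℝ f)
    (hg : Differentiable ℝ g) (p : ℝ × ℝ × ℝ) :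
    pd v (fun q => f q + g q) p = pd v f p + pd v g p := by
  unfold pd
  rw [fderiv_fun_add (hf p) (hg p)]; rfl

lemma pd_sub (v : ℝ × ℝ × ℝ) {f g : ℝ × ℝ × ℝ → ℝ} (hf : Differentiable ℝ f)
    (hg : Differentiable ℝ g) (p : ℝ × ℝ × ℝ) :
    pd v (fun q => f q - g q) p = pd v f p - pd v g p := by
  unfold pd
  rw [fderiv_fun_sub (hf p) (hg p)]; rfl

lemma pd_mul (v : ℝ × ℝ × ℝ) {f g : ℝ × ℝ × ℝ → ℝ} (hf : Differentiable ℝ f)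
    (hg : Differentiable ℝ g) (p : ℝ × ℝ × ℝ) :
    pd v (fun q => f q * g q) p = f p * pd v g p + g p * pd v f p := by
  unfold pd
  rw [fderiv_fun_mul (hf p) (hg p)]; rfl

lemma pd_x (v p : ℝ × ℝ × ℝ) : pd v (fun q => 2 * q.2.1) p = 2 * v.2.1 := by
  have h : HasFDerivAt (fun q : ℝ × ℝ × ℝ => 2 * q.2.1)
      ((2 : ℝ) • ((ContinuousLinearMap.fst ℝ ℝ ℝ).comp (ContinuousLinearMap.snd ℝ ℝ (ℝ × ℝ)))) p :=
    ((ContinuousLinearMap.fst ℝ ℝ ℝ).comp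
      (ContinuousLinearMap.snd ℝ ℝ (ℝ × ℝ))).hasFDerivAt.const_mul 2
  unfold pd
  rw [h.fderiv]; simp

lemma pd_y (v p : ℝ × ℝ × ℝ) : pd v (fun q => q.2.2) p = v.2.2 := by
  have h : HasFDerivAt (fun q : ℝ × ℝ × ℝ => q.2.2)
      ((ContinuousLinearMap.snd ℝ ℝ ℝ).comp (ContinuousLinearMap.snd ℝ ℝ (ℝ × ℝ))) p :=
    ((ContinuousLinearMap.snd ℝ ℝ ℝ).comp (ContinuousLinearMap.snd ℝ ℝ (ℝ × ℝ))).hasFDerivAt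
  unfold pd
  rw [h.fderiv]; simp

lemma pd_const (v p : ℝ × ℝ × ℝ) (k : ℝ) : pd v (fun _ => k) p = 0 := by
  simp [pd]

lemma pd_gop (v : ℝ × ℝ × ℝ) (k : ℝ) {u : ℝ × ℝ × ℝ → ℝ} (hu : ContDiff ℝ (⊤ : ℕ∞) u)
    (p : ℝ × ℝ × ℝ) :
    pd v (gop k u) p = gop k (pd v u) p - 2 * v.2.1 * dx u p - v.2.2 * dy u p := by
  have h0 := smooth_diff hu
  have ht : Differentiable ℝ (dt u) := smooth_diff (pd_smooth _ hu)
  have hx : Differentiable ℝ (dx u) := smooth_diff (pd_smooth _ hu)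
  have hy : Differentiable ℝ (dy u) := smooth_diff (pd_smooth _ hu)
  have h1 : Differentiable ℝ (fun q : ℝ × ℝ × ℝ => 2 * q.2.1) := by fun_prop
  have h2 : Differentiable ℝ (fun q : ℝ × ℝ × ℝ => q.2.2) := by fun_prop
  have h3 : Differentiable ℝ (fun _ : ℝ × ℝ × ℝ => k) := by fun_prop
  have ct : pd v (dt u) = dt (pd v u) := pd_comm _ _ hu
  have cx : pd v (dx u) = dx (pd v u) := pd_comm _ _ hu
  have cy : pd v (dy u) = dy (pd v u) := pd_comm _ _ hu
  unfold gop
  rw [pd_add v ((ht.fun_sub (h1.fun_mul hx)).fun_sub (h2.fun_mul hy)) (h3.fun_mul h0),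
    pd_sub v (ht.fun_sub (h1.fun_mul hx)) (h2.fun_mul hy), pd_sub v ht (h1.fun_mul hx),
    pd_mul v h1 hx, pd_mul v h2 hy, pd_mul v h3 h0, pd_x, pd_y, pd_const, ct, cx, cy]
  ring

lemma dt_gop (k : ℝ) {u : ℝ × ℝ × ℝ → ℝ} (hu : ContDiff ℝ (⊤ : ℕ∞) u) :
    dt (gop k u) = gop k (dt u) := by
  funext p
  have := pd_gop (1, 0, 0) k hu p
  simpa [dt] using this

lemma dx_gop (k : ℝ) {u : ℝ × ℝ × ℝ → ℝ} (hu : ContDiff ℝ (⊤ : ℕ∞) u) :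
    dx (gop k u) = gop (k - 2) (dx u) := by
  funext p
  have h := pd_gop (0, 1, 0) k hu p
  change dx (gop k u) p = gop k (dx u) p - 2 * 1 * dx u p - 0 * dy u p at h
  rw [h]; unfold gop; ring

lemma dy_gop (k : ℝ) {u : ℝ × ℝ × ℝ → ℝ} (hu : ContDiff ℝ (⊤ : ℕ∞) u) :
    dy (gop k u) = gop (k - 1) (dy u) := by
  funext p
  have h := pd_gop (0, 0, 1) k hu p
  change dy (gop k u) p = gop k (dy u) p - 2 * 0 * dx u p - 1 * dy u p at h
  rw [h]; unfold gop; ring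

/-- If `u` is a smooth solution of the Pavlov equation
`u_yy = u_tx + u_y·u_xx − u_x·u_xy`, then `φ = u_t − 2x·u_x − y·u_y + 3u`
satisfies the linearized equation
`φ_yy = φ_tx + u_y·φ_xx + u_xx·φ_y − u_x·φ_xy − u_xy·φ_x`. -/
theorem pavlov_symmetry (u : ℝ × ℝ × ℝ → ℝ)
    (hu : ContDiff ℝ (⊤ : ℕ∞) u)
    (hsol : ∀ p : ℝ × ℝ × ℝ,
      dy (dy u) p = dx (dt u) p + dy u p * dx (dx u) p - dx u p * dy (dx u) p) :
    ∀ p : ℝ × ℝ × ℝ,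
      dy (dy (phi u)) p =
        dx (dt (phi u)) p + dy u p * dx (dx (phi u)) p + dx (dx u) p * dy (phi u) p
          - dx u p * dy (dx (phi u)) p - dy (dx u) p * dx (phi u) p := by
  intro p
  have st : ContDiff ℝ (⊤ : ℕ∞) (dt u) := pd_smooth _ hu
  have sx : ContDiff ℝ (⊤ : ℕ∞) (dx u) := pd_smooth _ hu
  have sy : ContDiff ℝ (⊤ : ℕ∞) (dy u) := pd_smooth _ hu
  have dX := smooth_diff sx
  have dY := smooth_diff sy
  have dtx : Differentiable ℝ (dx (dt u)) := smooth_diff (pd_smooth _ st)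
  have dxx : Differentiable ℝ (dx (dx u)) := smooth_diff (pd_smooth _ sx)
  have dxy : Differentiable ℝ (dy (dx u)) := smooth_diff (pd_smooth _ sx)
  have hphi : phi u = gop 3 u := rfl
  have hE : dy (dy u) = fun p =>
      dx (dt u) p + dy u p * dx (dx u) p - dx u p * dy (dx u) p := funext hsol
  have hD : ∀ v, pd v (dy (dy u)) p = pd v (dx (dt u)) p
      + (dy u p * pd v (dx (dx u)) p + dx (dx u) p * pd v (dy u) p)
      - (dx u p * pd v (dy (dx u)) p + dy (dx u) p * pd v (dx u) p) := by
    intro v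
    rw [hE, pd_sub v (dtx.fun_add (dY.fun_mul dxx)) (dX.fun_mul dxy), pd_add v dtx (dY.fun_mul dxx),
      pd_mul v dY dxx, pd_mul v dX dxy]
  have e := hsol p
  have e1 : dt (dy (dy u)) p = _ := hD (1, 0, 0)
  have e2 : dx (dy (dy u)) p = _ := hD (0, 1, 0)
  have e3 : dy (dy (dy u)) p = _ := hD (0, 0, 1)
  rw [hphi, dy_gop 3 hu, dy_gop _ sy, dt_gop 3 hu, dx_gop _ st, dx_gop 3 hu, dx_gop _ sx,
    dy_gop _ sx]
  simp only [gop]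
  simp only [dt, dx, dy] at e e1 e2 e3 ⊢
  linear_combination e1 - 2 * p.2.1 * e2 - p.2.2 * e3 + e
end

section
/- Define D(y,p,q,w) := w² − p·w − q − y and the rational functions X := −1/D and Y := −(w−p)/D. Then for all real numbers x, y, p, q, r, s, w with D(y,p,q,w) ≠ 0, setting t := (q+y)·r − p·s − 2, the identity ∂X/∂y + (∂X/∂p)·s + (∂X/∂q)·t + (∂X/∂w)·Y = (∂Y/∂p)·r + (∂Y/∂q)·s + (∂Y/∂w)·X holds, all partial derivatives being taken at the point (y,p,q,w). (Here p,q,r,s,t stand for u_x,u_y,u_xx,u_xy,u_yy, t being eliminated via Equation (E4); the identity is exactly the cross-derivative compatibility condition asserting that the system w_x = X, w_y = Y is a differential covering of Equation (E4).) -/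
/-- Denominator `D(y,p,q,w) = w² − pw − q − y` of the covering (15). -/
noncomputable def covD (y p q w : ℝ) : ℝ := w ^ 2 - p * w - q - y

/-- `X = −1/D` from the covering (15) of Equation (E4). -/
noncomputable def covX (y p q w : ℝ) : ℝ := -1 / covD y p q w

/-- `Y = −(w − p)/D` from the covering (15) of Equation (E4). -/
noncomputable def covY (y p q w : ℝ) : ℝ := -(w - p) / covD y p q w

/-- Cross-derivative compatibility `D_y(X) = D_x(Y)` of the covering
`w_x = X`, `w_y = Y` over Equation (E4)
`u_yy = (u_y + y)·u_xx − u_x·u_xy − 2`, where `p,q,r,s,t` stand for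
`u_x,u_y,u_xx,u_xy,u_yy` and `t = (q+y)·r − p·s − 2` is eliminated via (E4). -/
theorem covering_E4_compatibility (x y p q r s w : ℝ)
    (hD : covD y p q w ≠ 0) :
    deriv (fun y' => covX y' p q w) y
      + deriv (fun p' => covX y p' q w) p * s
      + deriv (fun q' => covX y p q' w) q * ((q + y) * r - p * s - 2)
      + deriv (fun w' => covX y p q w') w * covY y p q w
    = deriv (fun p' => covY y p' q w) p * r
      + deriv (fun q' => covY y p q' w) q * s
      + deriv (fun w' => covY y p q w') w * covX y p q w := by
  have hy : HasDerivAt (fun y' => covD y' p q w) (-1) y := by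
    unfold covD
    simpa using (hasDerivAt_id y).const_sub (w ^ 2 - p * w - q)
  have hp : HasDerivAt (fun p' => covD y p' q w) (-w) p := by
    unfold covD
    simpa using ((((hasDerivAt_id p).mul_const w).const_sub (w ^ 2)).sub_const q).sub_const y
  have hq : HasDerivAt (fun q' => covD y p q' w) (-1) q := by
    unfold covD
    simpa using ((hasDerivAt_id q).const_sub (w ^ 2 - p * w)).sub_const y
  have hw : HasDerivAt (fun w' => covD y p q w') (2 * w - p) w := by
    unfold covD
    simpa using ((((hasDerivAt_id w).pow 2).sub ((hasDerivAt_id w).const_mul p)).sub_const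
      q).sub_const y
  have np : HasDerivAt (fun p' : ℝ => -(w - p')) 1 p := by
    simpa using (hasDerivAt_id p).sub_const w
  have nw : HasDerivAt (fun w' : ℝ => -(w' - p)) (-1) w := by
    simpa using (hasDerivAt_id w).const_sub p
  have e1 := ((hasDerivAt_const y (-1 : ℝ)).fun_div hy hD).deriv
  have e2 := ((hasDerivAt_const p (-1 : ℝ)).fun_div hp hD).deriv
  have e3 := ((hasDerivAt_const q (-1 : ℝ)).fun_div hq hD).deriv
  have e4 := ((hasDerivAt_const w (-1 : ℝ)).fun_div hw hD).deriv
  have e5 := (np.fun_div hp hD).deriv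
  have e6 := ((hasDerivAt_const q (-(w - p))).fun_div hq hD).deriv
  have e7 := (nw.fun_div hw hD).deriv
  unfold covX covY
  rw [e1, e2, e3, e4, e5, e6, e7]
  have hd : covD y p q w = w ^ 2 - p * w - q - y := rfl
  have hy' : y = w ^ 2 - p * w - q - covD y p q w := by rw [hd]; ring
  generalize covD y p q w = d at *
  subst hy'
  field_simp
  ring
end
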